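/- arXiv:1907.01259 — 2 statements merged into one kernel-verified Lean document; each statement's English description precedes it below -/
import Mathlib

section
/- Let X be a pure finite n-dimensional simplicial complex and let a finite group G act simplicially on X, transitively on X(n). Define M_{-1} = 1 and M_k = Fill_k((k+1)·M_{k-1} + 1) for 0 ≤ k ≤ n−1. Fix 0 ≤ k ≤ n−1. If Sys_j(X) > (j+1)·M_{j-1} + 1 for every 0 ≤ j ≤ k, then Exp^k_b(X) ≥ 1/(C(n+1,k+1)·M_k). -/
open Finset

/-- A finite simplicial complex on vertex type `V`. -/
structure SCplx (V : Type) [DecidableEq V] where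
  faces : Finset (Finset V)
  empty_mem : ∅ ∈ faces
  down_closed : ∀ σ ∈ faces, ∀ τ ⊆ σ, τ ∈ faces

namespace SCplx

variable {V : Type} [DecidableEq V]

/-- Faces of cardinality `m`, i.e. the faces in `X(m-1)`. -/
def cfaces (X : SCplx V) (m : ℕ) : Finset (Finset V) :=
  X.faces.filter fun σ => σ.card = m

/-- `X` is pure `n`-dimensional. -/
def Pure (X : SCplx V) (n : ℕ) : Prop :=
  ∀ σ ∈ X.faces, ∃ τ ∈ X.cfaces (n + 1), σ ⊆ τ

/-- a chain/cochain of grade `m`: supported on faces of cardinality `m`. -/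
def IsGraded (X : SCplx V) (m : ℕ) (c : Finset V → ZMod 2) : Prop :=
  ∀ σ, c σ ≠ 0 → σ ∈ X.cfaces m

/-- boundary map (all degrees simultaneously, with the reduced convention `∂₀{v} = ∅`). -/
def bdry (X : SCplx V) (c : Finset V → ZMod 2) : Finset V → ZMod 2 := fun τ =>
  ∑ σ ∈ X.faces.filter (fun σ => τ ⊆ σ ∧ σ.card = τ.card + 1), c σ

/-- coboundary map (all degrees simultaneously). -/
def cobdry (X : SCplx V) (c : Finset V → ZMod 2) : Finset V → ZMod 2 := fun σ =>
  if σ ∈ X.faces then ∑ τ ∈ X.faces.filter (fun τ => τ ⊆ σ ∧ τ.card + 1 = σ.card), c τ else 0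

/-- support of a chain/cochain. -/
def supp (X : SCplx V) (c : Finset V → ZMod 2) : Finset (Finset V) :=
  X.faces.filter fun σ => c σ ≠ 0

/-- the size `|A|` of a chain. -/
def chainCard (X : SCplx V) (c : Finset V → ZMod 2) : ℕ := (X.supp c).card

/-- the chain consisting of a single simplex. -/
def sChain (τ : Finset V) : Finset V → ZMod 2 := fun σ => if σ = τ then 1 else 0

/-- the weight `w(τ)` in a pure `n`-dimensional complex. -/
noncomputable def w (X : SCplx V) (n : ℕ) (τ : Finset V) : ℝ :=
  (((X.cfaces (n + 1)).filter fun σ => τ ⊆ σ).card : ℝ) /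
    (((n + 1).choose τ.card : ℝ) * ((X.cfaces (n + 1)).card : ℝ))

/-- the weight `w(φ)` of a cochain. -/
noncomputable def wC (X : SCplx V) (n : ℕ) (c : Finset V → ZMod 2) : ℝ :=
  ∑ τ ∈ X.supp c, X.w n τ

/-- `φ ∈ B^k(X)`, i.e. `φ` is in the image of `d_{k-1}` on `C^{k-1}(X)`. -/
def IsCoboundary (X : SCplx V) (k : ℕ) (φ : Finset V → ZMod 2) : Prop :=
  ∃ ψ, X.IsGraded k ψ ∧ φ = X.cobdry ψ

/-- evaluation `φ(A)` of a cochain on a chain. -/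
def pair (X : SCplx V) (φ c : Finset V → ZMod 2) : ZMod 2 :=
  ∑ τ ∈ X.faces, φ τ * c τ

/-- A cone function for dimensions `-1,…,K-1` (i.e. a `(K-1)`-cone function)
with apex `v`; chains of dimension `j` are represented in grade (cardinality) `j+1`. -/
structure ConeFun (X : SCplx V) (K : ℕ) (v : V) where
  toFun : (Finset V → ZMod 2) → (Finset V → ZMod 2)
  map_add : ∀ c₁ c₂, toFun (c₁ + c₂) = toFun c₁ + toFun c₂
  graded : ∀ m ≤ K, ∀ c, X.IsGraded m c → X.IsGraded (m + 1) (toFun c)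
  apex : toFun (sChain ∅) = sChain {v}
  cone_eq : ∀ m, 1 ≤ m → m ≤ K → ∀ c, X.IsGraded m c →
    X.bdry (toFun c) = c + toFun (X.bdry c)

/-- the volume of a cone function. -/
def ConeFun.Vol {X : SCplx V} {K : ℕ} {v : V} (C : ConeFun X K v) : ℕ :=
  (X.cfaces K).sup fun τ => X.chainCard (C.toFun (sChain τ))

/-- the cone radius `Crad_{K-1}(X)`. -/
noncomputable def Crad (X : SCplx V) (K : ℕ) : ℕ∞ :=
  ⨅ (v : V) (C : ConeFun X K v), (C.Vol : ℕ∞)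

/-- push-forward of chains along a permutation of the vertices. -/
def pushChain (e : Equiv.Perm V) (c : Finset V → ZMod 2) : Finset V → ZMod 2 :=
  fun σ => c (σ.image e.symm)

/-- the action `ρ(g).f` of a group element on a cone function (on the level of raw maps). -/
def coneAct {G : Type*} [Group G] (ρ : G →* Equiv.Perm V) (g : G)
    (f : (Finset V → ZMod 2) → (Finset V → ZMod 2)) :
    (Finset V → ZMod 2) → (Finset V → ZMod 2) :=
  fun c => pushChain (ρ g) (f (pushChain (ρ g⁻¹) c))

/-- `c ∈ Z_k(X)` : a cycle of dimension `k` (grade `k+1`). -/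
def IsCycle (X : SCplx V) (k : ℕ) (c : Finset V → ZMod 2) : Prop :=
  X.IsGraded (k + 1) c ∧ X.bdry c = 0

/-- `c ∈ B_k(X)` : a boundary of dimension `k` (grade `k+1`). -/
def IsBdryChain (X : SCplx V) (k : ℕ) (c : Finset V → ZMod 2) : Prop :=
  ∃ a, X.IsGraded (k + 2) a ∧ X.bdry a = c

/-- the size of the smallest `k`-systole. -/
noncomputable def Sys (X : SCplx V) (k : ℕ) : ℕ∞ :=
  ⨅ (c : {c : Finset V → ZMod 2 // X.IsCycle k c ∧ ¬X.IsBdryChain k c}),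
    (X.chainCard c.1 : ℕ∞)

/-- `Fill_k(B)` : the size of the smallest filling of the cycle `B`. -/
noncomputable def FillB (X : SCplx V) (k : ℕ) (B : Finset V → ZMod 2) : ℕ∞ :=
  ⨅ (a : {a : Finset V → ZMod 2 // X.IsGraded (k + 2) a ∧ X.bdry a = B}),
    (X.chainCard a.1 : ℕ∞)

/-- `Fill_k(M)` : the filling function. -/
noncomputable def Fill (X : SCplx V) (k : ℕ) (M : ℕ∞) : ℕ∞ :=
  ⨆ (B : {B : Finset V → ZMod 2 // X.IsCycle k B ∧ (X.chainCard B : ℕ∞) ≤ M}),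
    X.FillB k B.1

/-- the constants `M_{k-1}` of Proposition `filling constants prop` (index shifted by one:
`Mconst X (k+1) = M_k`). -/
noncomputable def Mconst (X : SCplx V) : ℕ → ℕ∞
  | 0 => 1
  | (j + 1) => X.Fill j (((j : ℕ∞) + 1) * X.Mconst j + 1)

end SCplx

open scoped ENNReal

namespace SCplx

variable {V : Type} [DecidableEq V]

/-- the weight `w(τ)` in a pure `n`-dimensional complex, valued in `ℝ≥0∞`. -/
noncomputable def wE (X : SCplx V) (n : ℕ) (τ : Finset V) : ℝ≥0∞ :=
  (((X.cfaces (n + 1)).filter fun σ => τ ⊆ σ).card : ℝ≥0∞) /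
    (((n + 1).choose τ.card : ℝ≥0∞) * ((X.cfaces (n + 1)).card : ℝ≥0∞))

/-- the weight `w(φ)` of a cochain, valued in `ℝ≥0∞`. -/
noncomputable def wCE (X : SCplx V) (n : ℕ) (c : Finset V → ZMod 2) : ℝ≥0∞ :=
  ∑ τ ∈ X.supp c, X.wE n τ

end SCplx

namespace SCplx

section aux

variable {V : Type} [DecidableEq V]

lemma mem_cfaces {X : SCplx V} {m : ℕ} {σ : Finset V} :
    σ ∈ X.cfaces m ↔ σ ∈ X.faces ∧ σ.card = m := by simp [cfaces]

lemma erase_mem (X : SCplx V) {σ : Finset V} (h : σ ∈ X.faces) (a : V) : σ.erase a ∈ X.faces :=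
  X.down_closed _ h _ (Finset.erase_subset _ _)

lemma facets_eq (X : SCplx V) {σ : Finset V} (h : σ ∈ X.faces) :
    X.faces.filter (fun τ => τ ⊆ σ ∧ τ.card + 1 = σ.card) = σ.image (fun a => σ.erase a) := by
  ext τ
  simp only [mem_filter, mem_image]
  constructor
  · rintro ⟨_, h2, h3⟩
    have h4 : (σ \ τ).card = 1 := by
      have := Finset.card_sdiff_add_card_eq_card h2
      omega
    obtain ⟨a, ha⟩ := Finset.card_eq_one.mp h4
    have ha' : a ∈ σ \ τ := by rw [ha]; simp
    refine ⟨a, (mem_sdiff.mp ha').1, ?_⟩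
    ext x
    have hx : x ∈ σ \ τ ↔ x = a := by rw [ha]; simp
    rw [mem_sdiff] at hx
    rw [mem_erase]
    have := @h2 x
    tauto
  · rintro ⟨a, ha, rfl⟩
    exact ⟨X.erase_mem h a, erase_subset _ _, Finset.card_erase_add_one ha⟩

lemma sum_facets {M : Type*} [AddCommMonoid M] (X : SCplx V) {σ : Finset V} (h : σ ∈ X.faces)
    (F : Finset V → M) :
    ∑ τ ∈ X.faces.filter (fun τ => τ ⊆ σ ∧ τ.card + 1 = σ.card), F τ
      = ∑ a ∈ σ, F (σ.erase a) := by
  rw [facets_eq X h, Finset.sum_image]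
  exact Finset.erase_injOn σ

lemma cobdry_apply (X : SCplx V) {σ : Finset V} (h : σ ∈ X.faces) (c : Finset V → ZMod 2) :
    X.cobdry c σ = ∑ a ∈ σ, c (σ.erase a) := by
  rw [cobdry, if_pos h, sum_facets X h]

lemma double_sum (F : Finset V → ZMod 2) (σ : Finset V) :
    ∑ a ∈ σ, ∑ b ∈ σ.erase a, F ((σ.erase a).erase b) = 0 := by
  rw [Finset.sum_sigma']
  refine Finset.sum_involution (fun x _ => ⟨x.2, x.1⟩) ?_ ?_ ?_ ?_
  · rintro ⟨a, b⟩ _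
    simp only
    rw [Finset.erase_right_comm]
    exact CharTwo.add_self_eq_zero _
  · rintro ⟨a, b⟩ h _ h2
    simp only [mem_sigma, mem_erase] at h
    simp only [Sigma.mk.injEq] at h2
    exact h.2.1 h2.1
  · rintro ⟨a, b⟩ h
    simp only [mem_sigma, mem_erase] at h ⊢
    exact ⟨h.2.2, fun e => h.2.1 e.symm, h.1⟩
  · rintro ⟨a, b⟩ h
    rfl

lemma cobdry_cobdry (X : SCplx V) (c : Finset V → ZMod 2) : X.cobdry (X.cobdry c) = 0 := by
  ext1 σ
  by_cases h : σ ∈ X.faces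
  · rw [cobdry_apply X h]
    rw [Finset.sum_congr rfl (fun a _ => cobdry_apply X (X.erase_mem h a) c)]
    exact double_sum c σ
  · simp [cobdry, h]

lemma IsGraded.cobdry {X : SCplx V} {m : ℕ} {c : Finset V → ZMod 2} (hc : X.IsGraded m c) :
    X.IsGraded (m + 1) (X.cobdry c) := by
  intro σ hσ
  by_cases h : σ ∈ X.faces
  · rw [cobdry_apply X h] at hσ
    obtain ⟨a, ha, h2⟩ := Finset.exists_ne_zero_of_sum_ne_zero hσ
    have := (mem_cfaces.mp (hc _ h2)).2
    rw [mem_cfaces, ← this, Finset.card_erase_add_one ha]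
    exact ⟨h, rfl⟩
  · simp [SCplx.cobdry, h] at hσ

lemma IsGraded.add {X : SCplx V} {m : ℕ} {c d : Finset V → ZMod 2} (hc : X.IsGraded m c)
    (hd : X.IsGraded m d) : X.IsGraded m (c + d) := by
  intro σ hσ
  by_cases h : c σ = 0
  · apply hd
    simpa [h] using hσ
  · exact hc _ h

lemma IsGraded.sum {ι : Type*} {X : SCplx V} {m : ℕ} {s : Finset ι}
    {c : ι → Finset V → ZMod 2} (hc : ∀ i ∈ s, X.IsGraded m (c i)) :
    X.IsGraded m (∑ i ∈ s, c i) := by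
  intro σ hσ
  rw [Finset.sum_apply] at hσ
  obtain ⟨a, ha, h2⟩ := Finset.exists_ne_zero_of_sum_ne_zero hσ
  exact hc a ha _ h2

lemma isGraded_sChain {X : SCplx V} {σ : Finset V} (h : σ ∈ X.faces) :
    X.IsGraded σ.card (sChain σ) := by
  intro τ hτ
  by_cases e : τ = σ
  · subst e; exact mem_cfaces.mpr ⟨h, rfl⟩
  · simp [sChain, e] at hτ

lemma bdry_add (X : SCplx V) (c d : Finset V → ZMod 2) :
    X.bdry (c + d) = X.bdry c + X.bdry d := by
  ext1 τ
  simp [bdry, Finset.sum_add_distrib]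

lemma bdry_sum {ι : Type*} (X : SCplx V) (s : Finset ι) (c : ι → Finset V → ZMod 2) :
    X.bdry (∑ i ∈ s, c i) = ∑ i ∈ s, X.bdry (c i) := by
  ext1 τ
  simp only [bdry, Finset.sum_apply]
  rw [Finset.sum_comm]

lemma bdry_sChain (X : SCplx V) {σ : Finset V} (h : σ ∈ X.faces) :
    X.bdry (sChain σ) = ∑ a ∈ σ, sChain (σ.erase a) := by
  ext1 τ
  rw [Finset.sum_apply, ← sum_facets X h (fun ρ => sChain ρ τ)]
  simp only [bdry, sChain]
  rw [Finset.sum_ite_eq', Finset.sum_ite_eq]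
  simp only [mem_filter]
  congr 1
  apply propext
  constructor
  · rintro ⟨_, h2, h3⟩
    exact ⟨X.down_closed _ h _ h2, h2, h3.symm⟩
  · rintro ⟨_, h2, h3⟩
    exact ⟨h, h2, h3.symm⟩

lemma chainCard_add_le (X : SCplx V) (c d : Finset V → ZMod 2) :
    X.chainCard (c + d) ≤ X.chainCard c + X.chainCard d := by
  refine le_trans (Finset.card_le_card ?_) (Finset.card_union_le _ _)
  intro σ
  simp only [supp, mem_filter, mem_union, Pi.add_apply]
  rintro ⟨h1, h2⟩
  by_cases h : c σ = 0
  · right; exact ⟨h1, by simpa [h] using h2⟩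
  · left; exact ⟨h1, h⟩

lemma chainCard_zero (X : SCplx V) : X.chainCard 0 = 0 := by
  simp [chainCard, supp]

lemma chainCard_sum_le {ι : Type*} (X : SCplx V) (s : Finset ι) (c : ι → Finset V → ZMod 2) :
    X.chainCard (∑ i ∈ s, c i) ≤ ∑ i ∈ s, X.chainCard (c i) := by
  classical
  induction s using Finset.induction_on with
  | empty => simp [chainCard_zero]
  | insert a s ha ih =>
    rw [Finset.sum_insert ha, Finset.sum_insert ha]
    exact (chainCard_add_le _ _ _).trans (by gcongr)

lemma chainCard_sChain_le (X : SCplx V) (σ : Finset V) : X.chainCard (sChain σ) ≤ 1 := by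
  rw [chainCard, Finset.card_le_one]
  intro a ha b hb
  simp only [supp, mem_filter, sChain] at ha hb
  have h1 : a = σ := by by_contra h; simp [h] at ha
  have h2 : b = σ := by by_contra h; simp [h] at hb
  rw [h1, h2]

/-- Filling of small cycles. -/
lemma exists_fill (X : SCplx V) (j : ℕ) (M : ℕ∞) (hS : M < X.Sys j) (B : Finset V → ZMod 2)
    (hB : X.IsCycle j B) (hM : (X.chainCard B : ℕ∞) ≤ M) :
    ∃ a, X.IsGraded (j + 2) a ∧ X.bdry a = B ∧ (X.chainCard a : ℕ∞) ≤ X.Fill j M := by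
  have hb : X.IsBdryChain j B := by
    by_contra hb
    have : X.Sys j ≤ (X.chainCard B : ℕ∞) := iInf_le (fun c : {c : Finset V → ZMod 2 //
      X.IsCycle j c ∧ ¬X.IsBdryChain j c} => (X.chainCard c.1 : ℕ∞)) ⟨B, hB, hb⟩
    exact absurd (hM.trans_lt hS) (not_lt.mpr this)
  obtain ⟨a0, h1, h2⟩ := hb
  have : Nonempty {a : Finset V → ZMod 2 // X.IsGraded (j + 2) a ∧ X.bdry a = B} :=
    ⟨⟨a0, h1, h2⟩⟩
  obtain ⟨a, ha⟩ := ENat.exists_eq_iInf (fun a : {a : Finset V → ZMod 2 //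
      X.IsGraded (j + 2) a ∧ X.bdry a = B} => (X.chainCard a.1 : ℕ∞))
  refine ⟨a.1, a.2.1, a.2.2, ?_⟩
  rw [ha]
  exact le_iSup (fun B : {B : Finset V → ZMod 2 // X.IsCycle j B ∧ (X.chainCard B : ℕ∞) ≤ M} =>
    X.FillB j B.1) ⟨B, hB, hM⟩

/-- The local condition on a cone. -/
def GoodAt (X : SCplx V) (f : Finset V → Finset V → ZMod 2) (τ : Finset V) : Prop :=
  X.IsGraded (τ.card + 1) (f τ) ∧ (X.chainCard (f τ) : ℕ∞) ≤ X.Mconst τ.card ∧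
    X.bdry (f τ) = sChain τ + ∑ a ∈ τ, f (τ.erase a)

lemma exists_cone (X : SCplx V) (v : V) (hv : {v} ∈ X.faces) (k : ℕ)
    (hSys : ∀ j ≤ k, ((j : ℕ∞) + 1) * X.Mconst j + 1 < X.Sys j) :
    ∀ m ≤ k + 1, ∃ f : Finset V → Finset V → ZMod 2,
      ∀ τ ∈ X.faces, τ.card ≤ m → X.GoodAt f τ := by
  intro m
  induction m with
  | zero =>
    intro _
    refine ⟨fun _ => sChain {v}, ?_⟩
    intro τ hτ hc
    have : τ = ∅ := by simpa using hc
    subst this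
    refine ⟨?_, ?_, ?_⟩
    · simpa using isGraded_sChain hv
    · simp only [card_empty, Mconst]
      exact_mod_cast chainCard_sChain_le X {v}
    · rw [bdry_sChain X hv]
      simp
  | succ m ih =>
    intro hm
    obtain ⟨f, hf⟩ := ih (by omega)
    have key : ∀ τ : Finset V, ∃ a : Finset V → ZMod 2, τ ∈ X.faces → τ.card = m + 1 →
        X.IsGraded (m + 2) a ∧ X.bdry a = sChain τ + ∑ x ∈ τ, f (τ.erase x) ∧
        (X.chainCard a : ℕ∞) ≤ X.Mconst (m + 1) := by
      intro τ
      by_cases hτ : τ ∈ X.faces ∧ τ.card = m + 1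
      swap
      · exact ⟨0, fun h1 h2 => absurd ⟨h1, h2⟩ hτ⟩
      obtain ⟨hτ, hc⟩ := hτ
      have hce : ∀ x ∈ τ, (τ.erase x).card = m := by
        intro x hx
        have := Finset.card_erase_add_one hx
        omega
      have hg : ∀ x ∈ τ, X.GoodAt f (τ.erase x) := fun x hx =>
        hf _ (X.erase_mem hτ x) (hce x hx).le
      suffices hsuff : X.IsCycle m (sChain τ + ∑ x ∈ τ, f (τ.erase x)) ∧
          (X.chainCard (sChain τ + ∑ x ∈ τ, f (τ.erase x)) : ℕ∞) ≤
            ((m : ℕ∞) + 1) * X.Mconst m + 1 by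
        obtain ⟨a, h1, h2, h3⟩ := X.exists_fill m _ (hSys m (by omega)) _ hsuff.1 hsuff.2
        exact ⟨a, fun _ _ => ⟨h1, h2, h3⟩⟩
      constructor
      · refine ⟨?_, ?_⟩
        · rw [← hc]
          refine (isGraded_sChain hτ).add (IsGraded.sum ?_)
          intro x hx
          have := (hg x hx).1
          rwa [hce x hx, ← hc] at this
        · rw [bdry_add, bdry_sum, bdry_sChain X hτ,
            Finset.sum_congr rfl (fun x hx => (hg x hx).2.2), Finset.sum_add_distrib]
          ext1 ρ
          simp only [Pi.add_apply, Finset.sum_apply, Pi.zero_apply]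
          rw [double_sum (fun s => f s ρ) τ, add_zero]
          exact CharTwo.add_self_eq_zero _
      · have hle : X.chainCard (sChain τ + ∑ x ∈ τ, f (τ.erase x)) ≤
            1 + ∑ x ∈ τ, X.chainCard (f (τ.erase x)) :=
          (chainCard_add_le _ _ _).trans
            (add_le_add (chainCard_sChain_le _ _) (chainCard_sum_le _ _ _))
        calc (X.chainCard (sChain τ + ∑ x ∈ τ, f (τ.erase x)) : ℕ∞)
            ≤ ((1 + ∑ x ∈ τ, X.chainCard (f (τ.erase x)) : ℕ) : ℕ∞) := by exact_mod_cast hle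
          _ = 1 + ∑ x ∈ τ, (X.chainCard (f (τ.erase x)) : ℕ∞) := by push_cast; rfl
          _ ≤ 1 + ∑ x ∈ τ, X.Mconst m := by
              gcongr with x hx
              have := (hg x hx).2.1
              rwa [hce x hx] at this
          _ = ((m : ℕ∞) + 1) * X.Mconst m + 1 := by
              rw [Finset.sum_const, hc, nsmul_eq_mul, add_comm]
              push_cast
              rfl
    choose a ha using key
    refine ⟨fun τ => if τ.card = m + 1 then a τ else f τ, ?_⟩
    intro τ hτ hc
    have he : ∀ x ∈ τ, (τ.erase x).card ≠ m + 1 := by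
      intro x hx
      have := Finset.card_erase_add_one hx
      omega
    by_cases h : τ.card = m + 1
    · obtain ⟨h1, h2, h3⟩ := ha τ hτ h
      refine ⟨?_, ?_, ?_⟩
      · simp only [h, if_true]; exact h1
      · simp only [h, if_true]; exact h3
      · simp only [h, if_true]
        rw [h2]
        congr 1
        exact Finset.sum_congr rfl (fun x hx => by rw [if_neg (he x hx)])
    · obtain ⟨h1, h2, h3⟩ := hf τ hτ (by omega)
      refine ⟨?_, ?_, ?_⟩
      · simp only [h, if_false]; exact h1
      · simp only [h, if_false]; exact h2
      · simp only [h, if_false]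
        rw [h3]
        congr 1
        exact Finset.sum_congr rfl (fun x hx => by rw [if_neg (he x hx)])

lemma pair_add (X : SCplx V) (φ c d : Finset V → ZMod 2) :
    X.pair φ (c + d) = X.pair φ c + X.pair φ d := by
  simp [pair, mul_add, Finset.sum_add_distrib]

lemma pair_sum {ι : Type*} (X : SCplx V) (φ : Finset V → ZMod 2) (s : Finset ι)
    (c : ι → Finset V → ZMod 2) :
    X.pair φ (∑ i ∈ s, c i) = ∑ i ∈ s, X.pair φ (c i) := by
  simp only [pair, Finset.sum_apply, Finset.mul_sum]
  rw [Finset.sum_comm]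

lemma pair_sChain (X : SCplx V) (φ : Finset V → ZMod 2) {σ : Finset V} (h : σ ∈ X.faces) :
    X.pair φ (sChain σ) = φ σ := by
  simp [pair, sChain, h]

lemma pair_cobdry (X : SCplx V) (φ c : Finset V → ZMod 2) :
    X.pair (X.cobdry φ) c = X.pair φ (X.bdry c) := by
  simp only [pair, bdry, Finset.mul_sum, Finset.sum_filter]
  rw [Finset.sum_comm]
  refine Finset.sum_congr rfl fun σ hσ => ?_
  rw [cobdry, if_pos hσ, Finset.sum_mul, Finset.sum_filter]
  refine Finset.sum_congr rfl fun τ hτ => ?_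
  by_cases h : τ ⊆ σ ∧ τ.card + 1 = σ.card
  · rw [if_pos h, if_pos ⟨h.1, h.2.symm⟩]
  · rw [if_neg h, if_neg (fun h' => h ⟨h'.1, h'.2.symm⟩), mul_zero]

/-- contraction of a cochain by a cone -/
def iota (X : SCplx V) (f : Finset V → Finset V → ZMod 2) (k : ℕ) (φ : Finset V → ZMod 2) :
    Finset V → ZMod 2 := fun ρ => if ρ ∈ X.cfaces k then X.pair φ (f ρ) else 0

lemma iota_graded (X : SCplx V) (f : Finset V → Finset V → ZMod 2) (k : ℕ)
    (φ : Finset V → ZMod 2) : X.IsGraded k (X.iota f k φ) := by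
  intro ρ h
  by_contra h2
  simp [iota, h2] at h

lemma iota_homotopy (X : SCplx V) (f : Finset V → Finset V → ZMod 2) (k : ℕ)
    (φ : Finset V → ZMod 2) {τ : Finset V} (hτ : τ ∈ X.cfaces (k + 1)) (hg : X.GoodAt f τ) :
    φ τ + X.cobdry (X.iota f k φ) τ = X.pair (X.cobdry φ) (f τ) := by
  rw [mem_cfaces] at hτ
  rw [pair_cobdry, hg.2.2, pair_add, pair_sum, pair_sChain X φ hτ.1, cobdry_apply X hτ.1]
  congr 1
  refine Finset.sum_congr rfl fun a ha => ?_
  rw [iota, if_pos]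
  rw [mem_cfaces]
  have := Finset.card_erase_add_one ha
  exact ⟨X.erase_mem hτ.1 a, by omega⟩

/-- number of top simplices containing a face -/
def deg (X : SCplx V) (n : ℕ) (τ : Finset V) : ℕ :=
  ((X.cfaces (n + 1)).filter fun σ => τ ⊆ σ).card

/-- unnormalized weight -/
def wN (X : SCplx V) (n : ℕ) (c : Finset V → ZMod 2) : ℕ := ∑ τ ∈ X.supp c, X.deg n τ

lemma sum_deg (X : SCplx V) (n m : ℕ) :
    ∑ τ ∈ X.cfaces m, X.deg n τ = (X.cfaces (n + 1)).card * (n + 1).choose m := by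
  have h := Finset.sum_card_bipartiteAbove_eq_sum_card_bipartiteBelow
    (s := X.cfaces m) (t := X.cfaces (n + 1)) (fun τ σ => τ ⊆ σ)
  simp only [Finset.bipartiteAbove, Finset.bipartiteBelow] at h
  simp only [deg]
  rw [h, ← smul_eq_mul, ← Finset.sum_const]
  refine Finset.sum_congr rfl fun σ hσ => ?_
  rw [mem_cfaces] at hσ
  rw [← hσ.2, ← Finset.card_powersetCard]
  congr 1
  ext τ
  simp only [mem_filter, mem_cfaces, mem_powersetCard]
  constructor
  · rintro ⟨⟨_, h2⟩, h3⟩; exact ⟨h3, h2⟩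
  · rintro ⟨h3, h2⟩; exact ⟨⟨X.down_closed _ hσ.1 _ h3, h2⟩, h3⟩

/-- tops containing a bad face -/
def bad (X : SCplx V) (n : ℕ) (c : Finset V → ZMod 2) : Finset (Finset V) :=
  (X.cfaces (n + 1)).filter fun σ => ∃ η, η ⊆ σ ∧ c η ≠ 0

lemma bad_count (X : SCplx V) (n k : ℕ) (φ : Finset V → ZMod 2)
    (hφ : X.IsGraded (k + 1) φ) :
    (X.bad n (X.cobdry φ)).card * (n - k) ≤ X.wN n (X.cobdry φ) := by
  have h := Finset.sum_card_bipartiteAbove_eq_sum_card_bipartiteBelow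
    (s := X.supp (X.cobdry φ)) (t := X.cfaces (n + 1)) (fun τ σ => τ ⊆ σ)
  simp only [Finset.bipartiteAbove, Finset.bipartiteBelow] at h
  simp only [wN, deg]
  rw [h, ← smul_eq_mul, ← Finset.sum_const]
  refine le_trans (Finset.sum_le_sum ?_)
    (Finset.sum_le_sum_of_subset (Finset.filter_subset _ _))
  intro σ hσ
  simp only [bad, mem_filter] at hσ
  obtain ⟨hσ, η, hη, hc⟩ := hσ
  rw [mem_cfaces] at hσ
  have hηf := mem_cfaces.mp (hφ.cobdry _ hc)
  have key : ∀ u ∈ σ \ η, ∃ a, a ∈ η ∧ X.cobdry φ ((insert u η).erase a) ≠ 0 := by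
    intro u hu
    rw [mem_sdiff] at hu
    have hf : insert u η ∈ X.faces :=
      X.down_closed _ hσ.1 _ (Finset.insert_subset hu.1 hη)
    have h0 := congrFun (X.cobdry_cobdry φ) (insert u η)
    rw [cobdry_apply X hf, Finset.sum_insert hu.2, Finset.erase_insert hu.2] at h0
    have h1 : ∑ a ∈ η, X.cobdry φ ((insert u η).erase a) ≠ 0 := by
      intro h1
      rw [h1, add_zero] at h0
      exact hc h0
    obtain ⟨a, ha, h2⟩ := Finset.exists_ne_zero_of_sum_ne_zero h1
    exact ⟨a, ha, h2⟩
  choose! a ha hac using key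
  set S := (X.supp (X.cobdry φ)).filter (fun τ => τ ⊆ σ) with hS
  have hmem : ∀ τ, τ ⊆ σ → X.cobdry φ τ ≠ 0 → τ ∈ S := by
    intro τ h1 h2
    simp only [hS, supp, mem_filter]
    exact ⟨⟨X.down_closed _ hσ.1 _ h1, h2⟩, h1⟩
  have hηS : η ∈ S := hmem _ hη hc
  have hu_mem : ∀ u ∈ σ \ η, u ∈ (insert u η).erase (a u) := by
    intro u hu
    rw [mem_erase]
    refine ⟨?_, mem_insert_self _ _⟩
    rintro e
    have := ha u hu
    rw [← e] at this
    exact (mem_sdiff.mp hu).2 this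
  have hcard : (σ \ η).card ≤ (S.erase η).card := by
    refine Finset.card_le_card_of_injOn (fun u => (insert u η).erase (a u)) ?_ ?_
    · intro u hu
      have hu : u ∈ σ \ η := hu
      have hum := hu_mem u hu
      simp only [coe_erase, Set.mem_sdiff, mem_coe, Set.mem_singleton_iff]
      refine ⟨hmem _ ?_ (hac u hu), ?_⟩
      · exact (erase_subset _ _).trans (Finset.insert_subset (mem_sdiff.mp hu).1 hη)
      · intro e
        rw [e] at hum
        exact (mem_sdiff.mp hu).2 hum
    · intro u hu u' hu' e
      have hu : u ∈ σ \ η := hu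
      have hum := hu_mem u hu
      simp only at e
      rw [e] at hum
      have := (mem_erase.mp hum).2
      rw [mem_insert] at this
      exact this.resolve_right (mem_sdiff.mp hu).2
  have h1 := Finset.card_sdiff_add_card_eq_card hη
  have h2 := Finset.card_erase_add_one hηS
  have h3 := hσ.2
  have h4 := hηf.2
  omega

/-- pull back a cochain -/
def pull (e : Equiv.Perm V) (c : Finset V → ZMod 2) : Finset V → ZMod 2 := fun σ => c (σ.image e)

lemma image_symm_image (e : Equiv.Perm V) (σ : Finset V) : (σ.image e).image e.symm = σ := by
  rw [Finset.image_image]; simp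

lemma image_image_symm (e : Equiv.Perm V) (σ : Finset V) : (σ.image e.symm).image e = σ := by
  rw [Finset.image_image]; simp

/-- automorphism -/
def IsAut (X : SCplx V) (e : Equiv.Perm V) : Prop := ∀ σ, σ.image e ∈ X.faces ↔ σ ∈ X.faces

lemma IsAut.symm {X : SCplx V} {e : Equiv.Perm V} (h : X.IsAut e) : X.IsAut e.symm := by
  intro σ
  rw [← h, image_image_symm]

lemma IsAut.cfaces {X : SCplx V} {e : Equiv.Perm V} (h : X.IsAut e) (m : ℕ) (σ : Finset V) :
    σ.image e ∈ X.cfaces m ↔ σ ∈ X.cfaces m := by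
  rw [mem_cfaces, mem_cfaces, h, Finset.card_image_of_injective _ e.injective]

lemma IsAut.deg {X : SCplx V} {e : Equiv.Perm V} (h : X.IsAut e) (n : ℕ) (τ : Finset V) :
    X.deg n (τ.image e) = X.deg n τ := by
  symm
  refine Finset.card_bij' (fun σ _ => σ.image e) (fun σ _ => σ.image e.symm) ?_ ?_ ?_ ?_
  · intro σ hσ
    simp only [mem_filter] at hσ ⊢
    exact ⟨(h.cfaces _ _).mpr hσ.1, Finset.image_subset_image hσ.2⟩
  · intro σ hσ
    simp only [mem_filter] at hσ ⊢
    refine ⟨(h.symm.cfaces _ _).mpr hσ.1, ?_⟩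
    have := Finset.image_subset_image (f := e.symm) hσ.2
    rwa [image_symm_image] at this
  · intro σ _; exact image_symm_image _ _
  · intro σ _; exact image_image_symm _ _

lemma IsAut.wN {X : SCplx V} {e : Equiv.Perm V} (h : X.IsAut e) (n : ℕ)
    (c : Finset V → ZMod 2) : X.wN n (pull e c) = X.wN n c := by
  refine Finset.sum_bij' (fun σ _ => σ.image e) (fun σ _ => σ.image e.symm) ?_ ?_ ?_ ?_ ?_
  · intro σ hσ
    simp only [supp, mem_filter] at hσ ⊢
    exact ⟨(h _).mpr hσ.1, hσ.2⟩
  · intro σ hσ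
    simp only [supp, mem_filter] at hσ ⊢
    refine ⟨(h.symm _).mpr hσ.1, ?_⟩
    rw [pull, image_image_symm]
    exact hσ.2
  · intro σ _; exact image_symm_image _ _
  · intro σ _; exact image_image_symm _ _
  · intro σ _; exact (h.deg n σ).symm

lemma IsAut.graded {X : SCplx V} {e : Equiv.Perm V} (h : X.IsAut e) {m : ℕ}
    {c : Finset V → ZMod 2} (hc : X.IsGraded m c) : X.IsGraded m (pull e c) := by
  intro σ hσ
  exact (h.cfaces m σ).mp (hc _ hσ)

lemma IsAut.cobdry {X : SCplx V} {e : Equiv.Perm V} (h : X.IsAut e) (c : Finset V → ZMod 2) :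
    X.cobdry (pull e c) = pull e (X.cobdry c) := by
  ext1 σ
  by_cases hσ : σ ∈ X.faces
  · have h2 := (h σ).mpr hσ
    simp only [pull]
    rw [cobdry_apply X hσ, cobdry_apply X h2, Finset.sum_image e.injective.injOn]
    refine Finset.sum_congr rfl fun a ha => ?_
    rw [pull, Finset.image_erase e.injective]
  · have h2 : σ.image e ∉ X.faces := fun h3 => hσ ((h σ).mp h3)
    simp [SCplx.cobdry, pull, hσ, h2]

lemma pull_pull_symm (e : Equiv.Perm V) (c : Finset V → ZMod 2) : pull e (pull e.symm c) = c := by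
  ext1 σ
  simp only [pull, image_symm_image]

lemma count_trans (X : SCplx V) (n : ℕ) {G : Type} [Group G] [Fintype G]
    (ρ : G →* Equiv.Perm V) (haut : ∀ g, X.IsAut (ρ g))
    (htrans : ∀ σ ∈ X.cfaces (n + 1), ∀ τ ∈ X.cfaces (n + 1), ∃ g : G, σ.image (ρ g) = τ)
    (T : Finset (Finset V)) (hT : T ⊆ X.cfaces (n + 1)) (σ : Finset V)
    (hσ : σ ∈ X.cfaces (n + 1)) :
    (X.cfaces (n + 1)).card * (Finset.univ.filter fun g : G => σ.image (ρ g) ∈ T).card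
      = Fintype.card G * T.card := by
  have h := Finset.sum_card_bipartiteAbove_eq_sum_card_bipartiteBelow
    (s := X.cfaces (n + 1)) (t := (Finset.univ : Finset G)) (fun τ g => τ.image (ρ g) ∈ T)
  simp only [Finset.bipartiteAbove, Finset.bipartiteBelow] at h
  rw [← smul_eq_mul, ← Finset.sum_const, Fintype.card, ← smul_eq_mul, ← Finset.sum_const]
  refine Eq.trans (Finset.sum_congr rfl ?_) (h.trans (Finset.sum_congr rfl ?_))
  · intro τ hτ
    obtain ⟨g, hg⟩ := htrans σ hσ τ hτ
    have hm : ∀ x, τ.image (ρ x) = σ.image (ρ (x * g)) := by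
      intro x
      rw [← hg, Finset.image_image, map_mul, Equiv.Perm.coe_mul]
    refine Finset.card_bij' (fun x _ => x * g⁻¹) (fun x _ => x * g) ?_ ?_ ?_ ?_
    · intro x hx
      rw [mem_filter] at hx ⊢
      rw [hm, inv_mul_cancel_right]
      exact ⟨mem_univ _, hx.2⟩
    · intro x hx
      rw [mem_filter] at hx ⊢
      rw [← hm]
      exact ⟨mem_univ _, hx.2⟩
    · intro x _; simp
    · intro x _; simp
  · intro g _
    refine Finset.card_bij' (fun x _ => x.image (ρ g)) (fun x _ => x.image (ρ g).symm) ?_ ?_ ?_ ?_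
    · intro x hx
      exact (mem_filter.mp hx).2
    · intro x hx
      rw [mem_filter, image_image_symm]
      exact ⟨((haut g).symm.cfaces _ _).mpr (hT hx), hx⟩
    · intro x _; exact image_symm_image _ _
    · intro x _; exact image_image_symm _ _

/-- The combinatorial core. -/
lemma core (X : SCplx V) (n : ℕ) (hpure : X.Pure n)
    {G : Type} [Group G] [Fintype G] (ρ : G →* Equiv.Perm V) (haut : ∀ g, X.IsAut (ρ g))
    (htrans : ∀ σ ∈ X.cfaces (n + 1), ∀ τ ∈ X.cfaces (n + 1), ∃ g : G, σ.image (ρ g) = τ)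
    (k : ℕ) (f : Finset V → Finset V → ZMod 2)
    (hf : ∀ τ ∈ X.cfaces (k + 1), X.GoodAt f τ) (m : ℕ)
    (hm : ∀ τ ∈ X.cfaces (k + 1), X.chainCard (f τ) ≤ m)
    (φ : Finset V → ZMod 2) (hφ : X.IsGraded (k + 1) φ) (D : ℕ)
    (hD : ∀ ψ, X.IsCoboundary k ψ → D ≤ X.wN n (φ + ψ)) :
    D * (n + 1).choose (k + 2) ≤
      (n + 1).choose (k + 1) * (n + 1).choose (k + 1) * m * X.wN n (X.cobdry φ) := by
  obtain ⟨σ₀, hσ₀, -⟩ := hpure ∅ X.empty_mem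
  set T := X.bad n (X.cobdry φ) with hTdef
  have hT : T ⊆ X.cfaces (n + 1) := Finset.filter_subset _ _
  set K := (Finset.univ.filter fun g : G => σ₀.image (ρ g) ∈ T).card with hK
  have hcount := X.count_trans n ρ haut htrans T hT
  have hXn : 0 < (X.cfaces (n + 1)).card := Finset.card_pos.mpr ⟨_, hσ₀⟩
  have hKall : ∀ σ ∈ X.cfaces (n + 1),
      (Finset.univ.filter fun g : G => σ.image (ρ g) ∈ T).card = K := by
    intro σ hσ
    exact Nat.eq_of_mul_eq_mul_left hXn ((hcount σ hσ).trans (hcount σ₀ hσ₀).symm)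
  -- bound for each g
  have hg : ∀ g : G, D ≤ ∑ τ ∈ X.cfaces (k + 1), X.deg n τ *
      ((X.supp (f τ)).filter fun η => X.cobdry φ (η.image (ρ g)) ≠ 0).card := by
    intro g
    have ha := haut g
    set φg := pull (ρ g) φ
    have hφg : X.IsGraded (k + 1) φg := ha.graded hφ
    set ψg := X.cobdry (X.iota f k φg)
    have hψg : X.IsGraded (k + 1) ψg := (X.iota_graded f k φg).cobdry
    have h1 : D ≤ X.wN n (φg + ψg) := by
      have h2 := hD (pull (ρ g).symm ψg)
        ⟨pull (ρ g).symm (X.iota f k φg), ha.symm.graded (X.iota_graded f k φg),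
          (ha.symm.cobdry _).symm⟩
      rw [← ha.wN n] at h2
      have h3 : pull (ρ g) (φ + pull (ρ g).symm ψg) = φg + ψg := by
        conv_rhs => rw [← pull_pull_symm (ρ g) ψg]
        rfl
      rwa [h3] at h2
    refine h1.trans ?_
    have hsub : X.supp (φg + ψg) ⊆ X.cfaces (k + 1) := by
      intro τ hτ
      exact hφg.add hψg τ (mem_filter.mp hτ).2
    refine le_trans (Finset.sum_le_sum ?_) (Finset.sum_le_sum_of_subset hsub)
    intro τ hτ
    refine Nat.le_mul_of_pos_right _ (Finset.card_pos.mpr ?_)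
    have h5 := (mem_filter.mp hτ).2
    rw [Pi.add_apply, X.iota_homotopy f k φg (hsub hτ) (hf _ (hsub hτ)), ha.cobdry] at h5
    obtain ⟨η, hη, h6⟩ := Finset.exists_ne_zero_of_sum_ne_zero h5
    refine ⟨η, ?_⟩
    simp only [supp, mem_filter]
    exact ⟨⟨hη, right_ne_zero_of_mul h6⟩, left_ne_zero_of_mul h6⟩
  -- sum over g
  have hη : ∀ τ, ∀ η ∈ X.supp (f τ),
      (Finset.univ.filter fun g : G => X.cobdry φ (η.image (ρ g)) ≠ 0).card ≤ K := by
    intro τ η hη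
    obtain ⟨σ, hσ, hs⟩ := hpure η (mem_filter.mp hη).1
    rw [← hKall σ hσ]
    refine Finset.card_le_card ?_
    intro g hg'
    simp only [mem_filter, mem_univ, true_and] at hg' ⊢
    rw [hTdef, bad, mem_filter]
    exact ⟨((haut g).cfaces _ _).mpr hσ, _, Finset.image_subset_image hs, hg'⟩
  have hsum : Fintype.card G * D ≤
      (X.cfaces (n + 1)).card * (n + 1).choose (k + 1) * (m * K) := by
    calc Fintype.card G * D = ∑ g : G, D := by simp
      _ ≤ ∑ g : G, ∑ τ ∈ X.cfaces (k + 1), X.deg n τ *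
            ((X.supp (f τ)).filter fun η => X.cobdry φ (η.image (ρ g)) ≠ 0).card :=
          Finset.sum_le_sum fun g _ => hg g
      _ = ∑ τ ∈ X.cfaces (k + 1), X.deg n τ * ∑ g : G,
            ((X.supp (f τ)).filter fun η => X.cobdry φ (η.image (ρ g)) ≠ 0).card := by
          rw [Finset.sum_comm]
          simp only [Finset.mul_sum]
      _ ≤ ∑ τ ∈ X.cfaces (k + 1), X.deg n τ * (m * K) := by
          refine Finset.sum_le_sum fun τ hτ => Nat.mul_le_mul_left _ ?_
          have h := Finset.sum_card_bipartiteAbove_eq_sum_card_bipartiteBelow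
            (s := X.supp (f τ)) (t := (Finset.univ : Finset G))
            (fun η g => X.cobdry φ (η.image (ρ g)) ≠ 0)
          simp only [Finset.bipartiteAbove, Finset.bipartiteBelow] at h
          rw [← h]
          refine (Finset.sum_le_card_nsmul _ _ K (hη τ)).trans ?_
          rw [smul_eq_mul]
          exact Nat.mul_le_mul_right _ (hm τ hτ)
      _ = _ := by rw [← Finset.sum_mul, sum_deg]
  have hKT := hcount σ₀ hσ₀
  have hD2 : D ≤ (n + 1).choose (k + 1) * m * T.card := by
    refine Nat.le_of_mul_le_mul_left (c := Fintype.card G) ?_ Fintype.card_pos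
    calc Fintype.card G * D ≤ _ := hsum
      _ = ((X.cfaces (n + 1)).card * K) * ((n + 1).choose (k + 1) * m) := by ring
      _ = (Fintype.card G * T.card) * ((n + 1).choose (k + 1) * m) := by rw [hKT]
      _ = _ := by ring
  have hb := X.bad_count n k φ hφ
  have hch : (n + 1).choose (k + 2) ≤ (n + 1).choose (k + 1) * (n - k) := by
    have := Nat.choose_succ_right_eq (n + 1) (k + 1)
    have e : n + 1 - (k + 1) = n - k := by omega
    rw [e] at this
    rw [← this]
    exact Nat.le_mul_of_pos_right _ (by omega)
  calc D * (n + 1).choose (k + 2)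
      ≤ ((n + 1).choose (k + 1) * m * T.card) * ((n + 1).choose (k + 1) * (n - k)) :=
        Nat.mul_le_mul hD2 hch
    _ = (n + 1).choose (k + 1) * (n + 1).choose (k + 1) * m * (T.card * (n - k)) := by ring
    _ ≤ _ := Nat.mul_le_mul_left _ hb

lemma wCE_eq (X : SCplx V) (n m : ℕ) {c : Finset V → ZMod 2} (hc : X.IsGraded m c) :
    X.wCE n c = (X.wN n c : ℝ≥0∞) /
      (((n + 1).choose m : ℝ≥0∞) * ((X.cfaces (n + 1)).card : ℝ≥0∞)) := by
  simp only [wCE, wN, wE, deg]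
  push_cast
  simp only [div_eq_mul_inv]
  rw [Finset.sum_mul]
  refine Finset.sum_congr rfl fun τ hτ => ?_
  rw [(mem_cfaces.mp (hc τ (mem_filter.mp hτ).2)).2]

end aux

end SCplx

open SCplx in
/-- For a strongly symmetric pure finite `n`-dimensional complex, with
`M_{-1} = 1`, `M_k = Fill_k((k+1)M_{k-1}+1)` (so `Mconst X (k+1) = M_k`): if
`Sys_j(X) > (j+1)·M_{j-1}+1` for all `0 ≤ j ≤ k`, then `Exp^k_b(X) ≥ 1/(C(n+1,k+1)·M_k)`,
stated pointwise: for every `k`-cochain `φ ∉ B^k(X)`,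
`(1/(C(n+1,k+1)·M_k)) · dist(φ,B^k(X)) ≤ w(d_k φ)`. -/
theorem stmt6 {V : Type} [DecidableEq V] (n : ℕ) (X : SCplx V) (hpure : X.Pure n)
    {G : Type} [Group G] [Fintype G] (ρ : G →* Equiv.Perm V)
    (hface : ∀ (g : G), ∀ σ ∈ X.faces, σ.image (ρ g) ∈ X.faces)
    (htrans : ∀ σ ∈ X.cfaces (n + 1), ∀ τ ∈ X.cfaces (n + 1), ∃ g : G, σ.image (ρ g) = τ)
    (k : ℕ) (hk : k < n)
    (hSys : ∀ j ≤ k, ((j : ℕ∞) + 1) * X.Mconst j + 1 < X.Sys j) :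
    ∀ φ : Finset V → ZMod 2, X.IsGraded (k + 1) φ → ¬X.IsCoboundary k φ →
      (1 / (((n + 1).choose (k + 1) : ℝ≥0∞) * (X.Mconst (k + 1) : ℝ≥0∞))) *
          sInf {r : ℝ≥0∞ | ∃ ψ, X.IsCoboundary k ψ ∧ r = X.wCE n (φ + ψ)} ≤
        X.wCE n (X.cobdry φ) := by
  intro φ hφ _
  have haut : ∀ g, X.IsAut (ρ g) := by
    intro g σ
    refine ⟨fun h => ?_, hface g σ⟩
    have h2 := hface g⁻¹ _ h
    rw [Finset.image_image, ← Equiv.Perm.coe_mul, ← map_mul] at h2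
    simpa using h2
  obtain ⟨σ₀, hσ₀, -⟩ := hpure ∅ X.empty_mem
  have hσ₀' := mem_cfaces.mp hσ₀
  obtain ⟨v, hv⟩ : σ₀.Nonempty := by
    rw [← Finset.card_pos, hσ₀'.2]; omega
  have hvf : {v} ∈ X.faces := X.down_closed _ hσ₀'.1 _ (by simpa using hv)
  obtain ⟨f, hf⟩ := X.exists_cone v hvf k hSys (k + 1) le_rfl
  have hf' : ∀ τ ∈ X.cfaces (k + 1), X.GoodAt f τ := fun τ hτ =>
    hf τ (mem_cfaces.mp hτ).1 (mem_cfaces.mp hτ).2.le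
  obtain ⟨m, hmM, hm⟩ : ∃ m : ℕ, (m : ℕ∞) ≤ X.Mconst (k + 1) ∧
      ∀ τ ∈ X.cfaces (k + 1), X.chainCard (f τ) ≤ m := by
    have hb : ∀ τ ∈ X.cfaces (k + 1), (X.chainCard (f τ) : ℕ∞) ≤ X.Mconst (k + 1) := by
      intro τ hτ
      have := (hf' τ hτ).2.1
      rwa [(mem_cfaces.mp hτ).2] at this
    generalize X.Mconst (k + 1) = M at hb
    induction M using ENat.recTopCoe with
    | top => exact ⟨(X.cfaces (k + 1)).sup fun τ => X.chainCard (f τ), le_top,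
        fun τ hτ => Finset.le_sup (f := fun τ => X.chainCard (f τ)) hτ⟩
    | coe M => exact ⟨M, le_rfl, fun τ hτ => by exact_mod_cast hb τ hτ⟩
  -- minimizer
  obtain ⟨ψ₀, hψ₀, hmin⟩ : ∃ ψ₀, X.IsCoboundary k ψ₀ ∧
      ∀ ψ, X.IsCoboundary k ψ → X.wN n (φ + ψ₀) ≤ X.wN n (φ + ψ) := by
    have hne : {ψ | X.IsCoboundary k ψ}.Nonempty :=
      ⟨X.cobdry 0, 0, fun σ h => absurd rfl h, rfl⟩
    refine ⟨Function.argminOn (fun ψ => X.wN n (φ + ψ)) _ hne,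
      Function.argminOn_mem _ _ hne, fun ψ hψ =>
        Function.argminOn_le (fun ψ => X.wN n (φ + ψ)) {ψ | X.IsCoboundary k ψ} hψ⟩
  have hcore := X.core n hpure ρ haut htrans k f hf' m hm φ hφ _ hmin
  have hgr : X.IsGraded (k + 1) (φ + ψ₀) := by
    obtain ⟨χ, hχ, rfl⟩ := hψ₀
    exact hφ.add hχ.cobdry
  have hC1 : 0 < (n + 1).choose (k + 1) := Nat.choose_pos (by omega)
  have hC2 : 0 < (n + 1).choose (k + 2) := Nat.choose_pos (by omega)
  have hXn : 0 < (X.cfaces (n + 1)).card := Finset.card_pos.mpr ⟨_, hσ₀⟩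
  have hinf : sInf {r : ℝ≥0∞ | ∃ ψ, X.IsCoboundary k ψ ∧ r = X.wCE n (φ + ψ)} ≤
      X.wCE n (φ + ψ₀) := sInf_le ⟨ψ₀, hψ₀, rfl⟩
  have hmM' : (m : ℝ≥0∞) ≤ (X.Mconst (k + 1) : ℝ≥0∞) := by
    have := ENat.toENNReal_le.mpr hmM
    simpa using this
  rw [mul_comm, mul_one_div]
  refine ENNReal.div_le_of_le_mul (hinf.trans ?_)
  rw [X.wCE_eq n _ hgr, X.wCE_eq n _ hφ.cobdry]
  refine le_trans ?_ (mul_le_mul_right (mul_le_mul_right hmM' _) _)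
  generalize X.wN n (φ + ψ₀) = D at hcore
  generalize X.wN n (X.cobdry φ) = W at hcore
  generalize (n + 1).choose (k + 1) = c1 at *
  have e2 : k + 1 + 1 = k + 2 := rfl
  rw [e2]
  generalize (n + 1).choose (k + 2) = c2 at *
  generalize (X.cfaces (n + 1)).card = N at *
  have hR : (D : ℝ) / (c1 * N) ≤ (W : ℝ) / (c2 * N) * (c1 * m) := by
    have h1 : (0 : ℝ) < c1 := by exact_mod_cast hC1
    have h2 : (0 : ℝ) < c2 := by exact_mod_cast hC2
    have h3 : (0 : ℝ) < N := by exact_mod_cast hXn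
    have h4 : (D : ℝ) * c2 ≤ c1 * c1 * m * W := by exact_mod_cast hcore
    rw [div_mul_eq_mul_div, div_le_div_iff₀ (by positivity) (by positivity)]
    nlinarith
  have hE := ENNReal.ofReal_le_ofReal hR
  have h1 : (0 : ℝ) < c1 := by exact_mod_cast hC1
  have h2 : (0 : ℝ) < c2 := by exact_mod_cast hC2
  have h3 : (0 : ℝ) < N := by exact_mod_cast hXn
  rw [ENNReal.ofReal_mul (by positivity), ENNReal.ofReal_div_of_pos (by positivity),
    ENNReal.ofReal_div_of_pos (by positivity), ENNReal.ofReal_mul h1.le, ENNReal.ofReal_mul h2.le,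
    ENNReal.ofReal_mul h1.le] at hE
  simpa only [ENNReal.ofReal_natCast] using hE
end

section
/- Let G be a finite group with subgroups K_i, i ∈ I, where I is a finite set with |I| = n+1 ≥ 2, let X = X(G,(K_i)_{i∈I}) be the coset complex, and assume G acts transitively on X(n). Suppose the subgroups boundedly generate G and set N_0' = 1 + max_{g∈G} min{ l : g = g_1⋯g_l with g_1,...,g_l ∈ ⋃_i K_i }. Then Exp^0_b(X) ≥ 1/((n+1)·N_0'). -/
open Finset

/-- Adjacency in the coset complex `X(G,(K i))`: the cosets `u = gK_i` and `v = g'K_j`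
are adjacent iff `i ≠ j` and `gK_i ∩ g'K_j ≠ ∅`. -/
def cosetAdj {G : Type*} [Group G] {I : Type*} (K : I → Subgroup G)
    (u v : (i : I) × (G ⧸ K i)) : Prop :=
  u.1 ≠ v.1 ∧
    ∃ x : G, (QuotientGroup.mk x : G ⧸ K u.1) = u.2 ∧ (QuotientGroup.mk x : G ⧸ K v.1) = v.2

attribute [local instance] Classical.propDecidable

namespace CosetAux

/-- the vertex `gK_i`. -/
def vx {n : ℕ} {G : Type} [Group G] (K : Fin (n + 1) → Subgroup G) (g : G) (i : Fin (n + 1)) :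
    (i : Fin (n + 1)) × (G ⧸ K i) := ⟨i, (QuotientGroup.mk g : G ⧸ K i)⟩

/-- the standard chamber `{gK_i : i}`. -/
noncomputable def ch {n : ℕ} {G : Type} [Group G] (K : Fin (n + 1) → Subgroup G) (g : G) :
    Finset ((i : Fin (n + 1)) × (G ⧸ K i)) := Finset.univ.image (vx K g)

theorem vx_inj {n : ℕ} {G : Type} [Group G] (K : Fin (n + 1) → Subgroup G) (g : G) :
    Function.Injective (vx K g) := by
  intro a b h
  exact congrArg Sigma.fst h

theorem mem_ch {n : ℕ} {G : Type} [Group G] (K : Fin (n + 1) → Subgroup G) (g : G)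
    (u : (i : Fin (n + 1)) × (G ⧸ K i)) : u ∈ ch K g ↔ ∃ i, vx K g i = u := by
  simp [ch]

theorem vx_mul {n : ℕ} {G : Type} [Group G] (K : Fin (n + 1) → Subgroup G) (g x : G)
    (i : Fin (n + 1)) (hx : x ∈ K i) : vx K (g * x) i = vx K g i := by
  unfold vx
  congr 1
  exact QuotientGroup.mk_mul_of_mem g hx

theorem ch_face {n : ℕ} {G : Type} [Group G] (K : Fin (n + 1) → Subgroup G)
    (X : SCplx ((i : Fin (n + 1)) × (G ⧸ K i)))
    (hX : ∀ σ : Finset ((i : Fin (n + 1)) × (G ⧸ K i)),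
      σ ∈ X.faces ↔ ∀ u ∈ σ, ∀ v ∈ σ, u ≠ v → cosetAdj K u v) (g : G) :
    ch K g ∈ X.cfaces (n + 1) := by
  unfold SCplx.cfaces
  rw [Finset.mem_filter]
  constructor
  · rw [hX]
    intro u hu v hv huv
    rw [mem_ch] at hu hv
    obtain ⟨i, rfl⟩ := hu
    obtain ⟨j, rfl⟩ := hv
    refine ⟨?_, g, rfl, rfl⟩
    intro h
    apply huv
    have : i = j := h
    rw [this]
  · unfold ch
    rw [Finset.card_image_of_injective _ (vx_inj K g)]
    simp

theorem ch_smul {n : ℕ} {G : Type} [Group G] (K : Fin (n + 1) → Subgroup G) (g x : G) :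
    (ch K x).image (fun u => (⟨u.1, g • u.2⟩ : (i : Fin (n + 1)) × (G ⧸ K i))) = ch K (g * x) := by
  unfold ch
  rw [Finset.image_image]
  rfl

theorem fib_le {n : ℕ} {G : Type} [Group G] [Fintype G] (K : Fin (n + 1) → Subgroup G)
    (σ τ : Finset ((i : Fin (n + 1)) × (G ⧸ K i))) (g : G)
    (h : σ.image (fun u => (⟨u.1, g • u.2⟩ : (i : Fin (n + 1)) × (G ⧸ K i))) = τ) :
    (Finset.univ.filter fun x : G => ch K x = σ).card ≤
      (Finset.univ.filter fun x : G => ch K x = τ).card := by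
  apply Finset.card_le_card_of_injOn (fun x => g * x)
  · intro x hx
    simp only [Finset.coe_filter, Finset.mem_univ, true_and, Set.mem_ofPred_eq] at hx ⊢
    rw [← ch_smul, hx, h]
  · intro x _ y _ hxy
    exact mul_left_cancel hxy

/-- the weight as a probability over `G`. -/
theorem w_eq {n : ℕ} {G : Type} [Group G] [Fintype G] (K : Fin (n + 1) → Subgroup G)
    (X : SCplx ((i : Fin (n + 1)) × (G ⧸ K i)))
    (hX : ∀ σ : Finset ((i : Fin (n + 1)) × (G ⧸ K i)),
      σ ∈ X.faces ↔ ∀ u ∈ σ, ∀ v ∈ σ, u ≠ v → cosetAdj K u v)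
    (htrans : ∀ σ ∈ X.cfaces (n + 1), ∀ τ ∈ X.cfaces (n + 1),
      ∃ g : G, σ.image (fun u => (⟨u.1, g • u.2⟩ : (i : Fin (n + 1)) × (G ⧸ K i))) = τ)
    (τ : Finset ((i : Fin (n + 1)) × (G ⧸ K i))) :
    X.w n τ = ((Finset.univ.filter fun g : G => τ ⊆ ch K g).card : ℝ) /
      (((n + 1).choose τ.card : ℝ) * (Fintype.card G : ℝ)) := by
  set m := (Finset.univ.filter fun x : G => ch K x = ch K 1).card with hm
  have hmpos : 0 < m := Finset.card_pos.2 ⟨1, by simp⟩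
  have hfib : ∀ σ ∈ X.cfaces (n + 1), (Finset.univ.filter fun x : G => ch K x = σ).card = m := by
    intro σ hσ
    obtain ⟨g, hg⟩ := htrans σ hσ _ (ch_face K X hX 1)
    obtain ⟨g', hg'⟩ := htrans _ (ch_face K X hX 1) σ hσ
    exact le_antisymm (fib_le K _ _ g hg) (fib_le K _ _ g' hg')
  have h1 : (Finset.univ.filter fun g : G => τ ⊆ ch K g).card =
      ((X.cfaces (n + 1)).filter fun σ => τ ⊆ σ).card * m := by
    rw [Finset.card_eq_sum_card_fiberwise (f := ch K)
      (t := (X.cfaces (n + 1)).filter fun σ => τ ⊆ σ)]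
    · rw [Finset.sum_const_nat]
      intro σ hσ
      rw [Finset.mem_filter] at hσ
      rw [← hfib σ hσ.1, Finset.filter_filter]
      congr 1
      ext x
      simp only [Finset.mem_filter, Finset.mem_univ, true_and]
      constructor
      · exact fun h => h.2
      · intro h
        exact ⟨h ▸ hσ.2, h⟩
    · intro g hg
      simp only [Finset.coe_filter, Finset.mem_univ, true_and, Set.mem_ofPred_eq] at hg ⊢
      exact ⟨ch_face K X hX g, hg⟩
  have h2 : Fintype.card G = (X.cfaces (n + 1)).card * m := by
    rw [← Finset.card_univ, Finset.card_eq_sum_card_fiberwise (f := ch K)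
      (t := X.cfaces (n + 1))]
    · rw [Finset.sum_const_nat]
      intro σ hσ
      exact hfib σ hσ
    · intro g hg
      exact ch_face K X hX g
  unfold SCplx.w
  rw [h1, h2]
  push_cast
  have : (m : ℝ) ≠ 0 := by positivity
  rw [← mul_assoc, mul_div_mul_right _ _ this]

theorem sum_w {n : ℕ} {G : Type} [Group G] [Fintype G] (K : Fin (n + 1) → Subgroup G)
    (X : SCplx ((i : Fin (n + 1)) × (G ⧸ K i)))
    (hX : ∀ σ : Finset ((i : Fin (n + 1)) × (G ⧸ K i)),
      σ ∈ X.faces ↔ ∀ u ∈ σ, ∀ v ∈ σ, u ≠ v → cosetAdj K u v)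
    (htrans : ∀ σ ∈ X.cfaces (n + 1), ∀ τ ∈ X.cfaces (n + 1),
      ∃ g : G, σ.image (fun u => (⟨u.1, g • u.2⟩ : (i : Fin (n + 1)) × (G ⧸ K i))) = τ)
    (S : Finset (Finset ((i : Fin (n + 1)) × (G ⧸ K i)))) (k : ℕ) (hS : ∀ τ ∈ S, τ.card = k) :
    ∑ τ ∈ S, X.w n τ = ((∑ g : G, (S.filter fun τ => τ ⊆ ch K g).card : ℕ) : ℝ) /
      (((n + 1).choose k : ℝ) * (Fintype.card G : ℝ)) := by
  have h := Finset.sum_card_bipartiteAbove_eq_sum_card_bipartiteBelow (s := S)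
    (t := (Finset.univ : Finset G)) (fun τ g => τ ⊆ ch K g)
  unfold Finset.bipartiteAbove Finset.bipartiteBelow at h
  rw [← h, Nat.cast_sum, Finset.sum_div]
  apply Finset.sum_congr rfl
  intro τ hτ
  rw [w_eq K X hX htrans, hS τ hτ]

theorem w_nonneg {n : ℕ} {G : Type} [Group G] (K : Fin (n + 1) → Subgroup G)
    (X : SCplx ((i : Fin (n + 1)) × (G ⧸ K i))) (τ) : 0 ≤ X.w n τ := by
  unfold SCplx.w
  positivity

theorem path {n : ℕ} {G : Type} [Group G] [Fintype G] (K : Fin (n + 1) → Subgroup G)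
    (F : G → Fin (n + 1) → ZMod 2) (hF : ∀ g x i, x ∈ K i → F (g * x) i = F g i)
    (E : ℕ) (hE : ∀ a b, n * (Finset.univ.filter fun h : G => F h a ≠ F h b).card ≤ E)
    (gs : List G) : (∀ x ∈ gs, ∃ i, x ∈ K i) → ∀ a b,
    n * (Finset.univ.filter fun h : G => F h a ≠ F (h * gs.prod) b).card ≤
      (gs.length + 1) * E := by
  induction gs with
  | nil =>
    intro _ a b
    simpa using hE a b
  | cons x gs ih =>
    intro hK a b
    obtain ⟨i, hi⟩ := hK x (by simp)
    have h1 := ih (fun y hy => hK y (by simp [hy])) i b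
    have h2 := hE a i
    have h3 : (Finset.univ.filter fun h : G => F (h * x) i ≠ F (h * x * gs.prod) b).card ≤
        (Finset.univ.filter fun h : G => F h i ≠ F (h * gs.prod) b).card := by
      apply Finset.card_le_card_of_injOn (fun h => h * x)
      · intro h hh
        simpa using hh
      · intro y _ z _ hyz
        exact mul_right_cancel hyz
    have h4 : (Finset.univ.filter fun h : G => F h a ≠ F (h * (x :: gs).prod) b).card ≤
        (Finset.univ.filter fun h : G => F h a ≠ F h i).card +
        (Finset.univ.filter fun h : G => F (h * x) i ≠ F (h * x * gs.prod) b).card := by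
      refine le_trans (Finset.card_le_card ?_) (Finset.card_union_le _ _)
      intro h hh
      have hh := (Finset.mem_filter.1 hh).2
      rw [List.prod_cons] at hh
      simp only [Finset.mem_filter, Finset.mem_univ, true_and, Finset.mem_union]
      rw [hF h x i hi]
      by_contra hc
      push Not at hc
      apply hh
      rw [hc.1, hc.2, mul_assoc]
    have h5 := Nat.mul_le_mul_left n (h4.trans (Nat.add_le_add_left h3 _))
    rw [List.length_cons]
    nlinarith

theorem average {n : ℕ} {G : Type} [Group G] [Fintype G] (K : Fin (n + 1) → Subgroup G)
    (F : G → Fin (n + 1) → ZMod 2) (hF : ∀ g x i, x ∈ K i → F (g * x) i = F g i)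
    (E : ℕ) (hE : ∀ a b, n * (Finset.univ.filter fun h : G => F h a ≠ F h b).card ≤ E)
    (L : ℕ)
    (hL : ∀ g : G, ∃ gs : List G,
      gs.length ≤ L ∧ (∀ x ∈ gs, ∃ i, x ∈ K i) ∧ gs.prod = g) :
    ∃ c : ZMod 2, n * ∑ g : G, (Finset.univ.filter fun i => F g i ≠ c).card ≤
      (n + 1) * (L + 1) * E := by
  have key : ∀ g i, n * (Finset.univ.filter fun h : G => F h 0 ≠ F (h * g) i).card ≤
      (L + 1) * E := by
    intro g i
    obtain ⟨gs, h1, h2, rfl⟩ := hL g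
    refine (path K F hF E hE gs h2 0 i).trans ?_
    gcongr
  have hs : ∑ h : G, n * ∑ g : G, (Finset.univ.filter fun i => F g i ≠ F h 0).card ≤
      ∑ h : G, (n + 1) * (L + 1) * E := by
    have e1 : ∀ h : G, ∑ g : G, (Finset.univ.filter fun i => F g i ≠ F h 0).card =
        ∑ g : G, ∑ i, if F h 0 ≠ F (h * g) i then 1 else 0 := by
      intro h
      rw [← Equiv.sum_comp (Equiv.mulLeft h)]
      apply Finset.sum_congr rfl
      intro g _
      rw [Finset.card_filter]
      apply Finset.sum_congr rfl
      intro i _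
      exact if_congr ne_comm rfl rfl
    have e2 : ∑ h : G, n * ∑ g : G, (Finset.univ.filter fun i => F g i ≠ F h 0).card =
        ∑ g : G, ∑ i, n * (Finset.univ.filter fun h : G => F h 0 ≠ F (h * g) i).card := by
      simp_rw [e1, Finset.card_filter, ← Finset.mul_sum]
      congr 1
      rw [Finset.sum_comm]
      apply Finset.sum_congr rfl
      intro g _
      rw [Finset.sum_comm]
    rw [e2]
    apply Finset.sum_le_sum
    intro g _
    refine (Finset.sum_le_sum (fun i _ => key g i)).trans ?_
    simp [mul_assoc]
  obtain ⟨h, -, hh⟩ := Finset.exists_le_of_sum_le (Finset.univ_nonempty) hs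
  exact ⟨F h 0, hh⟩

/-- coboundary on an edge. -/
theorem cobdry_edge {V : Type} [DecidableEq V] (X : SCplx V) (φ : Finset V → ZMod 2) (u v : V)
    (huv : u ≠ v) (hf : ({u, v} : Finset V) ∈ X.faces) :
    X.cobdry φ {u, v} = φ {u} + φ {v} := by
  unfold SCplx.cobdry
  rw [if_pos hf]
  have : X.faces.filter (fun τ => τ ⊆ ({u, v} : Finset V) ∧ τ.card + 1 = ({u, v} : Finset V).card)
      = {{u}, {v}} := by
    ext τ
    rw [Finset.card_pair huv]
    simp only [Finset.mem_filter, Finset.mem_insert, Finset.mem_singleton]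
    constructor
    · rintro ⟨_, h1, h2⟩
      obtain ⟨x, rfl⟩ := Finset.card_eq_one.1 (show τ.card = 1 by omega)
      have := h1 (Finset.mem_singleton_self x)
      simp only [Finset.mem_insert, Finset.mem_singleton] at this
      rcases this with rfl | rfl <;> simp
    · rintro (rfl | rfl)
      · exact ⟨X.down_closed _ hf _ (by simp), by simp, by simp⟩
      · exact ⟨X.down_closed _ hf _ (by simp), by simp, by simp⟩
  rw [this, Finset.sum_pair]
  intro h
  exact huv (Finset.singleton_injective h)

theorem cobdry_const_vertex {V : Type} [DecidableEq V] (X : SCplx V) (c : ZMod 2) (v : V)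
    (hf : ({v} : Finset V) ∈ X.faces) :
    X.cobdry (fun σ => if σ = ∅ then c else 0) {v} = c := by
  unfold SCplx.cobdry
  rw [if_pos hf, Finset.sum_eq_single ∅]
  · simp
  · intro b _ hb
    simp [hb]
  · intro h
    exact absurd (by simp [X.empty_mem]) h

theorem cobdry_const_card {V : Type} [DecidableEq V] (X : SCplx V) (c : ZMod 2) (σ : Finset V)
    (h : X.cobdry (fun σ => if σ = ∅ then c else 0) σ ≠ 0) : σ.card = 1 := by
  unfold SCplx.cobdry at h
  split_ifs at h with hf
  · obtain ⟨τ, hτ, hne⟩ := Finset.exists_ne_zero_of_sum_ne_zero h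
    simp only [Finset.mem_filter] at hτ
    have : τ = ∅ := by
      by_contra hc
      simp [hc] at hne
    subst this
    simpa using hτ.2.2.symm
  · exact absurd rfl h

theorem star {n : ℕ} {G : Type} [Group G] (K : Fin (n + 1) → Subgroup G)
    (X : SCplx ((i : Fin (n + 1)) × (G ⧸ K i)))
    (hX : ∀ σ : Finset ((i : Fin (n + 1)) × (G ⧸ K i)),
      σ ∈ X.faces ↔ ∀ u ∈ σ, ∀ v ∈ σ, u ≠ v → cosetAdj K u v)
    (φ : Finset ((i : Fin (n + 1)) × (G ⧸ K i)) → ZMod 2) (g : G) (a b : Fin (n + 1))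
    (hab : φ {vx K g a} ≠ φ {vx K g b}) :
    n ≤ (((X.supp (X.cobdry φ)).filter fun τ => τ.card = 2).filter fun τ => τ ⊆ ch K g).card := by
  have hne : a ≠ b := fun h => hab (by rw [h])
  have hc : (Finset.univ.erase a : Finset (Fin (n + 1))).card = n := by
    rw [Finset.card_erase_of_mem (Finset.mem_univ _)]
    simp
  let p : Fin (n + 1) → Fin (n + 1) := fun c => if φ {vx K g c} ≠ φ {vx K g a} then a else b
  have hp : ∀ c, φ {vx K g (p c)} ≠ φ {vx K g c} := by
    intro c
    by_cases h : φ {vx K g c} ≠ φ {vx K g a}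
    · simp only [p, if_pos h]
      exact h.symm
    · simp only [p, if_neg h]
      rw [not_not.1 h]
      exact hab.symm
  have hpab : ∀ c, p c = a ∨ p c = b := by
    intro c
    by_cases h : φ {vx K g c} ≠ φ {vx K g a}
    · left
      simp only [p, if_pos h]
    · right
      simp only [p, if_neg h]
  have hpc : ∀ c, p c ≠ c := fun c h => hp c (by rw [h])
  conv_lhs => rw [← hc]
  apply Finset.card_le_card_of_injOn (fun c => {vx K g (p c), vx K g c})
  · intro c hca
    have hvne : vx K g (p c) ≠ vx K g c := fun h => hpc c (vx_inj K g h)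
    have hsub : ({vx K g (p c), vx K g c} : Finset _) ⊆ ch K g := by
      intro u hu
      rw [mem_ch]
      simp only [Finset.mem_insert, Finset.mem_singleton] at hu
      rcases hu with rfl | rfl
      · exact ⟨_, rfl⟩
      · exact ⟨_, rfl⟩
    have hf : ({vx K g (p c), vx K g c} : Finset _) ∈ X.faces :=
      X.down_closed _ (Finset.mem_filter.1 (ch_face K X hX g)).1 _ hsub
    rw [Finset.mem_coe, Finset.mem_filter, Finset.mem_filter]
    refine ⟨⟨?_, Finset.card_pair hvne⟩, hsub⟩
    unfold SCplx.supp
    rw [Finset.mem_filter]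
    refine ⟨hf, ?_⟩
    rw [cobdry_edge X φ _ _ hvne hf]
    intro h
    apply hp c
    rwa [CharTwo.add_eq_zero] at h
  · intro c hca d hda hcd
    have hca' : c ≠ a := by simpa using hca
    have hda' : d ≠ a := by simpa using hda
    have h1 : vx K g c ∈ ({vx K g (p d), vx K g d} : Finset _) := by
      have : ({vx K g (p c), vx K g c} : Finset _) = {vx K g (p d), vx K g d} := hcd
      rw [← this]
      simp
    have h2 : vx K g d ∈ ({vx K g (p c), vx K g c} : Finset _) := by
      have : ({vx K g (p c), vx K g c} : Finset _) = {vx K g (p d), vx K g d} := hcd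
      rw [this]
      simp
    simp only [Finset.mem_insert, Finset.mem_singleton, (vx_inj K g).eq_iff] at h1 h2
    rcases h1 with h1 | h1
    · rcases h2 with h2 | h2
      · have := hpab c
        have := hpab d
        grind
      · exact h2.symm
    · exact h1

end CosetAux

open SCplx in
/-- Let `G` be a finite group with subgroups `K_0, …, K_n` (`n+1 ≥ 2` of
them), let `X = X(G,(K i))` be the coset complex (the clique complex of the coset adjacency
graph), and assume `G` acts transitively on `X(n)`. If every `g ∈ G` is a product of at most
`L` elements of `⋃ K_i` (so that `N_0' = L + 1` for the minimal such `L`), then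
`Exp^0_b(X) ≥ 1/((n+1)·N_0')`, stated pointwise: for every `0`-cochain `φ ∉ B^0(X)`,
`(1/((n+1)(L+1))) · dist(φ, B^0(X)) ≤ w(d_0 φ)`. -/
theorem stmt11 (n : ℕ) (hn : 1 ≤ n) {G : Type} [Group G] [Fintype G]
    (K : Fin (n + 1) → Subgroup G)
    (X : SCplx ((i : Fin (n + 1)) × (G ⧸ K i)))
    (hX : ∀ σ : Finset ((i : Fin (n + 1)) × (G ⧸ K i)),
      σ ∈ X.faces ↔ ∀ u ∈ σ, ∀ v ∈ σ, u ≠ v → cosetAdj K u v)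
    (htrans : ∀ σ ∈ X.cfaces (n + 1), ∀ τ ∈ X.cfaces (n + 1),
      ∃ g : G, σ.image (fun u => (⟨u.1, g • u.2⟩ : (i : Fin (n + 1)) × (G ⧸ K i))) = τ)
    (L : ℕ)
    (hL : ∀ g : G, ∃ gs : List G,
      gs.length ≤ L ∧ (∀ x ∈ gs, ∃ i, x ∈ K i) ∧ gs.prod = g) :
    ∀ φ, X.IsGraded 1 φ → ¬X.IsCoboundary 0 φ →
      (1 / (((n + 1) : ℝ) * ((L : ℝ) + 1))) *
          sInf {r : ℝ | ∃ ψ, X.IsCoboundary 0 ψ ∧ r = X.wC n (φ + ψ)} ≤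
        X.wC n (X.cobdry φ) := by
  classical
  intro φ hφ _
  let F : G → Fin (n + 1) → ZMod 2 := fun g i => φ {CosetAux.vx K g i}
  let S2 := (X.supp (X.cobdry φ)).filter fun τ => τ.card = 2
  let E : ℕ := ∑ g : G, (S2.filter fun τ => τ ⊆ CosetAux.ch K g).card
  have hF : ∀ g x i, x ∈ K i → F (g * x) i = F g i := by
    intro g x i hx
    simp only [F, CosetAux.vx_mul K g x i hx]
  have hE : ∀ a b, n * (Finset.univ.filter fun h : G => F h a ≠ F h b).card ≤ E := by
    intro a b
    calc n * (Finset.univ.filter fun h : G => F h a ≠ F h b).card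
        = ∑ h ∈ Finset.univ.filter (fun h : G => F h a ≠ F h b), n := by
          rw [Finset.sum_const, smul_eq_mul, mul_comm]
      _ ≤ ∑ h ∈ Finset.univ.filter (fun h : G => F h a ≠ F h b),
            (S2.filter fun τ => τ ⊆ CosetAux.ch K h).card := by
          apply Finset.sum_le_sum
          intro h hh
          exact CosetAux.star K X hX φ h a b (Finset.mem_filter.1 hh).2
      _ ≤ E := Finset.sum_le_sum_of_subset (Finset.filter_subset _ _)
  obtain ⟨c, hc⟩ := CosetAux.average K F hF E hE L hL
  have hGpos : (0 : ℝ) < Fintype.card G := by exact_mod_cast Fintype.card_pos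
  have hnpos : (0 : ℝ) < n := by exact_mod_cast hn
  have hchoose : (((n + 1).choose 2 : ℕ) : ℝ) = (n + 1) * n / 2 := by
    rw [Nat.cast_choose_two]
    push_cast
    ring
  have hlow : (E : ℝ) / (((n + 1) * n / 2) * Fintype.card G) ≤ X.wC n (X.cobdry φ) := by
    rw [← hchoose, ← CosetAux.sum_w K X hX htrans S2 2 (fun τ h => (Finset.mem_filter.1 h).2)]
    exact Finset.sum_le_sum_of_subset_of_nonneg (Finset.filter_subset _ _)
      (fun τ _ _ => CosetAux.w_nonneg K X τ)
  let δ : Finset ((i : Fin (n + 1)) × (G ⧸ K i)) → ZMod 2 := fun σ => if σ = ∅ then c else 0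
  have hδ : X.IsGraded 0 δ := by
    intro σ hσ
    have : σ = ∅ := by
      by_contra h
      simp [δ, h] at hσ
    subst this
    exact Finset.mem_filter.2 ⟨X.empty_mem, by simp⟩
  have hup : X.wC n (φ + X.cobdry δ) ≤
      ((∑ g : G, (Finset.univ.filter fun i => F g i ≠ c).card : ℕ) : ℝ) /
        (((n : ℝ) + 1) * Fintype.card G) := by
    unfold SCplx.wC
    rw [CosetAux.sum_w K X hX htrans _ 1, Nat.choose_one_right, Nat.cast_add_one]
    · gcongr with g _
      refine le_trans (Finset.card_le_card ?_) (Finset.card_image_le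
        (f := fun i => ({CosetAux.vx K g i} : Finset ((i : Fin (n + 1)) × (G ⧸ K i)))))
      intro τ hτ
      obtain ⟨hτ, hsub⟩ := Finset.mem_filter.1 hτ
      obtain ⟨hf, hne⟩ := Finset.mem_filter.1 hτ
      have hcard : τ.card = 1 := by
        by_cases h : φ τ = 0
        · apply CosetAux.cobdry_const_card X c
          simpa [h] using hne
        · exact (Finset.mem_filter.1 (hφ τ h)).2
      obtain ⟨v, rfl⟩ := Finset.card_eq_one.1 hcard
      obtain ⟨i, rfl⟩ := (CosetAux.mem_ch K g v).1 (hsub (Finset.mem_singleton_self v))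
      refine Finset.mem_image.2 ⟨i, Finset.mem_filter.2 ⟨Finset.mem_univ _, ?_⟩, rfl⟩
      intro h
      apply hne
      rw [Pi.add_apply, CosetAux.cobdry_const_vertex X c _ hf, CharTwo.add_eq_zero]
      exact h
    · intro τ hτ
      obtain ⟨hf, hne⟩ := Finset.mem_filter.1 hτ
      by_cases h : φ τ = 0
      · apply CosetAux.cobdry_const_card X c
        simpa [h] using hne
      · exact (Finset.mem_filter.1 (hφ τ h)).2
  have hinf : sInf {r : ℝ | ∃ ψ, X.IsCoboundary 0 ψ ∧ r = X.wC n (φ + ψ)} ≤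
      X.wC n (φ + X.cobdry δ) := by
    apply csInf_le
    · refine ⟨0, ?_⟩
      rintro r ⟨ψ, _, rfl⟩
      exact Finset.sum_nonneg (fun τ _ => CosetAux.w_nonneg K X τ)
    · exact ⟨_, ⟨δ, hδ, rfl⟩, rfl⟩
  have hc' : (n : ℝ) * ((∑ g : G, (Finset.univ.filter fun i => F g i ≠ c).card : ℕ) : ℝ) ≤
      ((n : ℝ) + 1) * (L + 1) * E := by
    exact_mod_cast hc
  refine le_trans ?_ hlow
  refine le_trans (mul_le_mul_of_nonneg_left (hinf.trans hup) (by positivity)) ?_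
  generalize ((∑ g : G, (Finset.univ.filter fun i => F g i ≠ c).card : ℕ) : ℝ) = A at hc'
  have hEn : (0 : ℝ) ≤ E := Nat.cast_nonneg _
  generalize (E : ℝ) = E' at *
  have h1 : A ≤ ((n : ℝ) + 1) * (L + 1) * E' / n := by
    rw [le_div_iff₀ hnpos]
    linarith
  calc 1 / (((n : ℝ) + 1) * ((L : ℝ) + 1)) * (A / (((n : ℝ) + 1) * Fintype.card G))
      ≤ 1 / (((n : ℝ) + 1) * ((L : ℝ) + 1)) *
        ((((n : ℝ) + 1) * (L + 1) * E' / n) / (((n : ℝ) + 1) * Fintype.card G)) := by gcongr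
    _ = E' / (((n : ℝ) + 1) * n * Fintype.card G) := by
      field_simp
    _ ≤ E' / ((((n : ℝ) + 1) * n / 2) * Fintype.card G) := by
      apply div_le_div_of_nonneg_left hEn (by positivity)
      have : (0 : ℝ) < ((n : ℝ) + 1) * n * Fintype.card G := by positivity
      linarith
end
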